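/- arXiv:2405.02838 — 2 statements merged into one kernel-verified Lean document; each statement's English description precedes it below -/
import Mathlib

section
/- For all μ, ν ∈ ℂⁿ, the Rawnsley coherent state kernel admits the closed form ψ_μ(ν) := Σ_{(q₁,…,qₙ): q₁+⋯+qₙ ≤ m} conj(μ₁^{q₁}⋯μₙ^{qₙ}) · ν₁^{q₁}⋯νₙ^{qₙ} / D_{(q₁,…,qₙ;q)} = (1 + ⟨μ,ν⟩)^m, where ⟨μ,ν⟩ = Σⱼ conj(μⱼ)νⱼ and D_{(q₁,…,qₙ;q)} = c(m) ∫_{ℂⁿ} |ν₁|^{2q₁}⋯|νₙ|^{2qₙ} (1+‖ν‖²)^{-(m+n+1)} dλ(ν). -/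
open MeasureTheory

/-- The normalizing constant `c(m)`, with
`c(m)⁻¹ = ∫_{ℂⁿ} (1+‖ν‖²)^{-(m+n+1)} dλ(ν)`. -/
noncomputable def cconst (n m : ℕ) : ℝ :=
  (∫ ν : Fin n → ℂ, ((1 + ∑ j, Complex.normSq (ν j)) ^ (m + n + 1))⁻¹)⁻¹

/-- `D_{(q₁,…,qₙ;q)} = c(m) ∫_{ℂⁿ} |ν₁|^{2q₁}⋯|νₙ|^{2qₙ} (1+‖ν‖²)^{-(m+n+1)} dλ(ν)`,
the squared weighted norm of the monomial `ν^q`. -/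
noncomputable def Dconst (n m : ℕ) (q : Fin n → ℕ) : ℝ :=
  cconst n m *
    ∫ ν : Fin n → ℂ, (∏ j, Complex.normSq (ν j) ^ q j) *
      ((1 + ∑ j, Complex.normSq (ν j)) ^ (m + n + 1))⁻¹

/-!
Writing `(1 + ‖ν‖²)^(-s)` as a Gamma integral `Γ(s)⁻¹ ∫ t^(s-1) e^{-t (1 + ‖ν‖²)} dt` turns the
weighted norm of a monomial into a superposition of Gaussian moments, which factor over the
coordinates. This gives `D_q = q₁! ⋯ qₙ! (m - |q|)! / m!`, the inverse of the multinomial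
coefficient of `x^q` in `(1 + x₁ + ⋯ + xₙ)^m`, so the kernel is the multinomial expansion at
`xⱼ = conj(μⱼ) νⱼ`.
-/

section GammaIntegrals

open Finset Real Set

variable {s : ℝ}

theorem Gamma_mul_integral_mul_rpow_neg {α : Type*} [MeasurableSpace α] {ρ : Measure α}
    [SFinite ρ] (hs : 0 < s) {A B : α → ℝ} (hA : Measurable A) (hB : Measurable B)
    (hA_nonneg : ∀ x, 0 ≤ A x) (hB_pos : ∀ x, 0 < B x)
    (h_inner : ∀ t, 0 < t → Integrable (fun x ↦ A x * exp (-(B x * t))) ρ)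
    (h_outer : IntegrableOn (fun t ↦ t ^ (s - 1) * ∫ x, A x * exp (-(B x * t)) ∂ρ) (Ioi 0)) :
    Gamma s * ∫ x, A x * B x ^ (-s) ∂ρ =
      ∫ t in Ioi (0 : ℝ), t ^ (s - 1) * ∫ x, A x * exp (-(B x * t)) ∂ρ := by
  have h_gamma (x : α) : Gamma s * (A x * B x ^ (-s)) =
      ∫ t in Ioi (0 : ℝ), t ^ (s - 1) * (A x * exp (-(B x * t))) := by
    simp_rw [mul_left_comm _ (A x)]
    rw [integral_const_mul, integral_rpow_mul_exp_neg_mul_Ioi hs (hB_pos x), one_div,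
      inv_rpow (hB_pos x).le, ← rpow_neg (hB_pos x).le, mul_comm (Gamma s)]
  have h_integrable : Integrable (fun p : α × ℝ ↦ p.2 ^ (s - 1) * (A p.1 * exp (-(B p.1 * p.2))))
      (ρ.prod (volume.restrict (Ioi 0))) := by
    refine (integrable_prod_iff' (by fun_prop)).2 ⟨?_, h_outer.congr ?_⟩
    · filter_upwards [ae_restrict_mem measurableSet_Ioi] with t ht
      exact (h_inner t ht).const_mul _
    · filter_upwards [ae_restrict_mem measurableSet_Ioi] with t ht
      have h_nonneg (x : α) : 0 ≤ t ^ (s - 1) * (A x * exp (-(B x * t))) :=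
        mul_nonneg (rpow_nonneg (le_of_lt ht) _) (mul_nonneg (hA_nonneg x) (exp_pos _).le)
      simp_rw [norm_of_nonneg (h_nonneg _), integral_const_mul]
  simp_rw [← integral_const_mul, h_gamma]
  exact integral_integral_swap h_integrable

theorem integral_normSq_rpow_mul_exp_neg {a t : ℝ} (ha : -1 < a) (ht : 0 < t) :
    ∫ z : ℂ, Complex.normSq z ^ a * exp (-(Complex.normSq z * t)) =
      π * Gamma (a + 1) * t ^ (-(a + 1)) := by
  calc ∫ z : ℂ, Complex.normSq z ^ a * exp (-(Complex.normSq z * t))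
      = ∫ z : ℂ, ‖z‖ ^ (2 * a) * exp (-t * ‖z‖ ^ (2 : ℝ)) := by
        congr! 3 with z
        · rw [rpow_mul (norm_nonneg z), rpow_two, Complex.normSq_eq_norm_sq]
        · rw [rpow_two, Complex.normSq_eq_norm_sq, neg_mul, mul_comm]
    _ = 2 * π / 2 * t ^ (-(2 * a + 2) / 2) * Gamma ((2 * a + 2) / 2) :=
        Complex.integral_rpow_mul_exp_neg_mul_rpow (by norm_num) (by linarith) ht
    _ = π * Gamma (a + 1) * t ^ (-(a + 1)) := by
        ring_nf

variable {ι : Type*} [Fintype ι]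

theorem integral_prod_normSq_rpow_mul_exp_neg {a : ι → ℝ} {t : ℝ} (ha : ∀ j, -1 < a j)
    (ht : 0 < t) :
    ∫ z : ι → ℂ, (∏ j, Complex.normSq (z j) ^ a j) *
        exp (-((1 + ∑ j, Complex.normSq (z j)) * t)) =
      (∏ j, π * Gamma (a j + 1)) * (exp (-t) * t ^ (-∑ j, (a j + 1))) := by
  have h_factor (z : ι → ℂ) : (∏ j, Complex.normSq (z j) ^ a j) *
      exp (-((1 + ∑ j, Complex.normSq (z j)) * t)) =
      exp (-t) * ∏ j, Complex.normSq (z j) ^ a j * exp (-(Complex.normSq (z j) * t)) := by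
    rw [prod_mul_distrib, ← exp_sum, sum_neg_distrib, ← sum_mul, mul_left_comm, ← exp_add]
    ring_nf
  simp_rw [h_factor]
  rw [integral_const_mul, integral_fintype_prod_volume_eq_prod
    (f := fun j (z : ℂ) ↦ Complex.normSq z ^ a j * exp (-(Complex.normSq z * t)))]
  simp_rw [integral_normSq_rpow_mul_exp_neg (ha _) ht]
  rw [prod_mul_distrib, ← rpow_sum_of_pos ht, sum_neg_distrib, mul_left_comm]

theorem Gamma_mul_integral_prod_normSq_rpow {a : ι → ℝ} (ha : ∀ j, -1 < a j)
    (has : ∑ j, (a j + 1) < s) :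
    Gamma s * ∫ z : ι → ℂ, (∏ j, Complex.normSq (z j) ^ a j) *
        (1 + ∑ j, Complex.normSq (z j)) ^ (-s) =
      (∏ j, π * Gamma (a j + 1)) * Gamma (s - ∑ j, (a j + 1)) := by
  have hs : 0 < s := (sum_nonneg fun j _ ↦ by linarith [ha j]).trans_lt has
  have h_normSq_sum (z : ι → ℂ) : 0 ≤ ∑ j, Complex.normSq (z j) :=
    sum_nonneg fun j _ ↦ Complex.normSq_nonneg _
  have h_const_pos : 0 < ∏ j, π * Gamma (a j + 1) :=
    prod_pos fun j _ ↦ mul_pos pi_pos (Gamma_pos_of_pos (by linarith [ha j]))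
  have h_outer : EqOn
      (fun t ↦ t ^ (s - 1) * ∫ z : ι → ℂ, (∏ j, Complex.normSq (z j) ^ a j) *
        exp (-((1 + ∑ j, Complex.normSq (z j)) * t)))
      (fun t ↦ (∏ j, π * Gamma (a j + 1)) * (exp (-t) * t ^ (s - ∑ j, (a j + 1) - 1)))
      (Ioi 0) := fun t (ht : 0 < t) ↦ by
    simp only
    rw [integral_prod_normSq_rpow_mul_exp_neg ha ht,
      show s - ∑ j, (a j + 1) - 1 = s - 1 + -∑ j, (a j + 1) by ring, rpow_add ht]
    ring
  rw [Gamma_mul_integral_mul_rpow_neg hs (by fun_prop) (by fun_prop)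
    (fun z ↦ prod_nonneg fun j _ ↦ rpow_nonneg (Complex.normSq_nonneg _) _)
    (fun z ↦ by linarith [h_normSq_sum z]) ?_ ?_]
  · rw [setIntegral_congr_fun measurableSet_Ioi h_outer, integral_const_mul,
      ← Gamma_eq_integral (sub_pos.2 has)]
  · intro t ht
    refine .of_integral_ne_zero ?_
    rw [integral_prod_normSq_rpow_mul_exp_neg ha ht]
    positivity
  · exact (integrableOn_congr_fun h_outer measurableSet_Ioi).2
      ((GammaIntegral_convergent (sub_pos.2 has)).const_mul _)

end GammaIntegrals

section HomogenizedExponent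

open Finset

variable {ι : Type*} [Fintype ι]

/-- The exponents of the degree-`m` homogenization of the monomial `∏ j, x j ^ q j`: the extra
variable, indexed by `none`, receives the missing degree `m - ∑ j, q j`. The subtraction is
truncated, so this is homogeneous of degree `m` only when `∑ j, q j ≤ m`. -/
def homogenizedExponent (m : ℕ) (q : ι → ℕ) : Option ι → ℕ :=
  fun o ↦ o.elim (m - ∑ j, q j) q

theorem sum_homogenizedExponent {m : ℕ} {q : ι → ℕ} (hq : ∑ j, q j ≤ m) :
    ∑ o, homogenizedExponent m q o = m := by
  simp [homogenizedExponent, Fintype.sum_option, hq]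

theorem homogenizedExponent_comp_some {m : ℕ} {k : Option ι → ℕ} (hk : ∑ o, k o = m) :
    homogenizedExponent m (fun j ↦ k (some j)) = k := by
  funext o
  cases o with
  | none => simp [homogenizedExponent, ← hk, Fintype.sum_option]
  | some j => rfl

theorem multinomial_homogenizedExponent_spec {m : ℕ} {q : ι → ℕ} (hq : ∑ j, q j ≤ m) :
    (m - ∑ j, q j).factorial * (∏ j, (q j).factorial) *
      Nat.multinomial univ (homogenizedExponent m q) = m.factorial := by
  have h_spec := Nat.multinomial_spec univ (homogenizedExponent m q)
  rwa [sum_homogenizedExponent hq, Fintype.prod_option] at h_spec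

theorem sum_piAntidiag_univ_option [DecidableEq ι] {M : Type*} [AddCommMonoid M] (m : ℕ)
    (f : (Option ι → ℕ) → M) :
    ∑ k ∈ piAntidiag univ m, f k =
      ∑ q : ι → Fin (m + 1) with ∑ j, (q j : ℕ) ≤ m,
        f (homogenizedExponent m fun j ↦ (q j : ℕ)) := by
  have h_sum {k : Option ι → ℕ} (hk : k ∈ piAntidiag univ m) : ∑ o, k o = m :=
    (mem_piAntidiag.1 hk).1
  have h_val {k : Option ι → ℕ} (hk : k ∈ piAntidiag univ m) (j : ι) :
      (Fin.ofNat (m + 1) (k (some j)) : ℕ) = k (some j) := by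
    refine Nat.mod_eq_of_lt (Nat.lt_succ_of_le ?_)
    exact (single_le_sum_of_canonicallyOrdered (mem_univ (some j))).trans_eq (h_sum hk)
  refine sum_nbij' (fun k j ↦ Fin.ofNat (m + 1) (k (some j)))
    (fun q ↦ homogenizedExponent m fun j ↦ (q j : ℕ)) ?_ ?_ ?_ ?_ ?_
  · intro k hk
    simp only [h_val hk, mem_filter_univ]
    exact (Nat.le_add_left _ _).trans_eq ((Fintype.sum_option k).symm.trans (h_sum hk))
  · intro q hq
    simpa using sum_homogenizedExponent (mem_filter.1 hq).2
  · intro k hk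
    simp only [h_val hk]
    exact homogenizedExponent_comp_some (h_sum hk)
  · intro q _
    ext j
    simp [homogenizedExponent]
  · intro k hk
    simp only [h_val hk, homogenizedExponent_comp_some (h_sum hk)]

theorem one_add_sum_pow {R : Type*} [CommSemiring R] [DecidableEq ι] (x : ι → R) (m : ℕ) :
    (1 + ∑ j, x j) ^ m =
      ∑ q : ι → Fin (m + 1) with ∑ j, (q j : ℕ) ≤ m,
        Nat.multinomial univ (homogenizedExponent m fun j ↦ (q j : ℕ)) *
          ∏ j, x j ^ (q j : ℕ) := by
  calc (1 + ∑ j, x j) ^ m = (∑ o : Option ι, o.elim 1 x) ^ m := by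
        simp only [Fintype.sum_option, Option.elim_none, Option.elim_some]
    _ = ∑ k ∈ piAntidiag univ m, Nat.multinomial univ k * ∏ o : Option ι, o.elim 1 x ^ k o :=
        sum_pow_eq_sum_piAntidiag _ _ _
    _ = _ := by
        simp only [sum_piAntidiag_univ_option, Fintype.prod_option, homogenizedExponent,
          Option.elim_none, Option.elim_some, one_pow, one_mul]

end HomogenizedExponent

section CoherentStateNorms

open Finset

theorem integral_prod_normSq_pow_mul_inv {ι : Type*} [Fintype ι] {m : ℕ} {q : ι → ℕ}
    (hq : ∑ j, q j ≤ m) :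
    ∫ z : ι → ℂ, (∏ j, Complex.normSq (z j) ^ q j) *
        ((1 + ∑ j, Complex.normSq (z j)) ^ (m + Fintype.card ι + 1))⁻¹ =
      Real.pi ^ Fintype.card ι * ((m - ∑ j, q j).factorial * ∏ j, (q j).factorial : ℕ) /
        (m + Fintype.card ι).factorial := by
  have h_exponent : ((m + Fintype.card ι + 1 : ℕ) : ℝ) - ∑ j, ((q j : ℝ) + 1) =
      ((m - ∑ j, q j : ℕ) : ℝ) + 1 := by
    simp only [Nat.cast_succ, Nat.cast_add, Nat.cast_sub hq, Nat.cast_sum, sum_add_distrib,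
      sum_const, card_univ, nsmul_one]
    ring
  have h_gamma := Gamma_mul_integral_prod_normSq_rpow (a := fun j ↦ (q j : ℝ))
    (s := (m + Fintype.card ι + 1 : ℕ)) (fun j ↦ neg_one_lt_zero.trans_le (Nat.cast_nonneg _))
    (by rw [← sub_pos, h_exponent]; positivity)
  rw [h_exponent, Nat.cast_succ, Real.Gamma_nat_eq_factorial, Real.Gamma_nat_eq_factorial,
    ← Nat.cast_succ] at h_gamma
  have h_base_nonneg (z : ι → ℂ) : 0 ≤ 1 + ∑ j, Complex.normSq (z j) :=
    add_nonneg zero_le_one (sum_nonneg fun j _ ↦ Complex.normSq_nonneg _)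
  simp_rw [Real.Gamma_nat_eq_factorial, Real.rpow_natCast, Real.rpow_neg (h_base_nonneg _),
    Real.rpow_natCast] at h_gamma
  rw [eq_div_iff (by positivity), mul_comm, h_gamma, prod_mul_distrib, prod_const, card_univ]
  push_cast
  ring

theorem Dconst_eq_inv_multinomial {n m : ℕ} {q : Fin n → ℕ} (hq : ∑ j, q j ≤ m) :
    Dconst n m q = (Nat.multinomial univ (homogenizedExponent m q) : ℝ)⁻¹ := by
  have h_total : ∫ z : Fin n → ℂ, ((1 + ∑ j, Complex.normSq (z j)) ^ (m + n + 1))⁻¹ =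
      Real.pi ^ n * m.factorial / (m + n).factorial := by
    simpa using integral_prod_normSq_pow_mul_inv (m := m) (q := fun _ : Fin n ↦ 0) (by simp)
  have h_moment := integral_prod_normSq_pow_mul_inv hq
  rw [Fintype.card_fin] at h_moment
  have h_spec := congrArg (Nat.cast (R := ℝ)) (multinomial_homogenizedExponent_spec hq)
  rw [Nat.cast_mul] at h_spec
  have h_multinomial_ne_zero : (Nat.multinomial univ (homogenizedExponent m q) : ℝ) ≠ 0 := by
    exact_mod_cast (Nat.multinomial_pos _ _).ne'
  rw [Dconst, cconst, h_total, h_moment, ← h_spec]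
  field_simp

end CoherentStateNorms

/-- closed form of the Rawnsley coherent state kernel:
`ψ_μ(ν) = Σ_{q₁+⋯+qₙ ≤ m} conj(μ^q) ν^q / D_q = (1 + ⟨μ,ν⟩)^m`. -/
theorem stmt_3 (n m : ℕ) (hn : 1 ≤ n) (μ ν : Fin n → ℂ) :
    ∑ q ∈ Finset.univ.filter (fun q : Fin n → Fin (m + 1) => ∑ j, (q j : ℕ) ≤ m),
      (starRingEnd ℂ) (∏ j, μ j ^ (q j : ℕ)) * (∏ j, ν j ^ (q j : ℕ)) /
        ((Dconst n m (fun j => (q j : ℕ)) : ℝ) : ℂ)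
    = (1 + ∑ j, (starRingEnd ℂ) (μ j) * ν j) ^ m := by
  rw [one_add_sum_pow]
  refine Finset.sum_congr rfl fun q hq ↦ ?_
  rw [Dconst_eq_inv_multinomial (Finset.mem_filter.1 hq).2]
  push_cast
  rw [map_prod, div_inv_eq_mul, ← Finset.prod_mul_distrib, mul_comm]
  simp_rw [map_pow, mul_pow]
end

section
/- Reproducing kernel property: for every polynomial function Ψ : ℂⁿ → ℂ of total degree at most m and every μ ∈ ℂⁿ, ⟨ψ_μ, Ψ⟩ₘ = c(m) ∫_{ℂⁿ} (1 + Σⱼ μⱼ·conj(νⱼ))^m · Ψ(ν) · (1+‖ν‖²)^{-(m+n+1)} dλ(ν) = Ψ(μ). In particular, ⟨ψ_μ, ψ_ν⟩ₘ = ψ_ν(μ) = (1 + ⟨ν,μ⟩)^m for all μ, ν ∈ ℂⁿ. -/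
open MeasureTheory

/-- The coherent state `ψ_μ(ν) = (1 + ⟨μ,ν⟩)^m` with `⟨μ,ν⟩ = Σⱼ conj(μⱼ)νⱼ`. -/
noncomputable def psiCS (n m : ℕ) (μ ν : Fin n → ℂ) : ℂ :=
  (1 + ∑ j, (starRingEnd ℂ) (μ j) * ν j) ^ m

/-- The weighted inner product
`⟨f,g⟩ₘ = c(m) ∫_{ℂⁿ} conj(f(ν)) g(ν) (1+‖ν‖²)^{-(m+n+1)} dλ(ν)`. -/
noncomputable def wInner (n m : ℕ) (f g : (Fin n → ℂ) → ℂ) : ℂ :=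
  ((cconst n m : ℝ) : ℂ) *
    ∫ ν : Fin n → ℂ, (starRingEnd ℂ) (f ν) * g ν *
      ((((1 + ∑ j, Complex.normSq (ν j)) ^ (m + n + 1) : ℝ) : ℂ))⁻¹

/-!
Integrating against `tᴺ e⁻ᵗ dt` turns the Gaussian `exp (-t ‖z‖²)` into a multiple of
`(1 + ‖z‖²) ^ (-(N + 1))`, so the squared norms of the monomials follow from those for Gaussian
weights, which factor over the coordinates. Distinct monomials are orthogonal because the weight is
invariant under rotating each coordinate separately. The coefficient of `z ^ α` in `ψ_μ`
is, up to a constant independent of `α`, the number `conj (μ ^ α)` divided by the squared norm of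
`z ^ α`; pairing `ψ_μ` with a polynomial therefore replaces each `z ^ α` by `μ ^ α`.
-/

open scoped Nat ComplexConjugate

section GammaIntegral

lemma integral_pow_mul_exp_neg_mul_Ioi (N : ℕ) {r : ℝ} (hr : 0 < r) :
    ∫ t in Set.Ioi (0 : ℝ), t ^ N * Real.exp (-(t * r)) = N ! / r ^ (N + 1) := by
  have h := Real.integral_rpow_mul_exp_neg_mul_Ioi (a := (N : ℝ) + 1) (by positivity) hr
  simp only [add_sub_cancel_right, Real.rpow_natCast, Real.Gamma_nat_eq_factorial,
    mul_comm r] at h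
  rw [h, ← Nat.cast_add_one, Real.rpow_natCast, one_div, inv_pow, inv_mul_eq_div]

variable {X : Type*} [MeasurableSpace X] {μ : Measure X} [SFinite μ] {g A : X → ℝ} {N : ℕ}

lemma integrable_prod_mul_pow_mul_exp_neg (hg : Measurable g) (hA : Measurable A) (hg₀ : 0 ≤ g)
    (hint : ∀ t > 0, Integrable (fun x => g x * Real.exp (-(t * A x))) μ)
    (hN : IntegrableOn (fun t => t ^ N * ∫ x, g x * Real.exp (-(t * A x)) ∂μ) (Set.Ioi 0)) :
    Integrable (fun p : X × ℝ => g p.1 * (p.2 ^ N * Real.exp (-(p.2 * A p.1))))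
      (μ.prod (volume.restrict (Set.Ioi 0))) := by
  refine (integrable_prod_iff' (by fun_prop)).2 ⟨?_, hN.congr_fun ?_ measurableSet_Ioi⟩
  · filter_upwards [ae_restrict_mem measurableSet_Ioi] with t ht
    simpa only [mul_left_comm] using (hint t ht).const_mul (t ^ N)
  · intro t (ht : 0 < t)
    have hnorm (x : X) : ‖g x * (t ^ N * Real.exp (-(t * A x)))‖ =
        t ^ N * (g x * Real.exp (-(t * A x))) := by
      rw [Real.norm_of_nonneg (mul_nonneg (hg₀ x) (by positivity)), mul_left_comm]
    simp only [hnorm, integral_const_mul]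

lemma integral_mul_inv_pow_eq_integral_exp (hg : Measurable g) (hA : Measurable A)
    (hg₀ : 0 ≤ g) (hA₀ : ∀ x, 0 < A x)
    (hint : ∀ t > 0, Integrable (fun x => g x * Real.exp (-(t * A x))) μ)
    (hN : IntegrableOn (fun t => t ^ N * ∫ x, g x * Real.exp (-(t * A x)) ∂μ) (Set.Ioi 0)) :
    ∫ x, g x * (A x ^ (N + 1))⁻¹ ∂μ =
      (N ! : ℝ)⁻¹ * ∫ t in Set.Ioi (0 : ℝ), t ^ N * ∫ x, g x * Real.exp (-(t * A x)) ∂μ := by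
  have inner_t (x : X) : ∫ t in Set.Ioi (0 : ℝ), g x * (t ^ N * Real.exp (-(t * A x))) =
      N ! * (g x * (A x ^ (N + 1))⁻¹) := by
    rw [integral_const_mul, integral_pow_mul_exp_neg_mul_Ioi N (hA₀ x)]
    ring
  have inner_x (t : ℝ) : ∫ x, g x * (t ^ N * Real.exp (-(t * A x))) ∂μ =
      t ^ N * ∫ x, g x * Real.exp (-(t * A x)) ∂μ := by
    simp only [mul_left_comm (g _), integral_const_mul]
  have swap := integral_integral_swap (f := fun x t => g x * (t ^ N * Real.exp (-(t * A x))))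
    (integrable_prod_mul_pow_mul_exp_neg hg hA hg₀ hint hN)
  simp only [inner_t, inner_x, integral_const_mul] at swap
  rw [← swap, inv_mul_cancel_left₀ (by positivity)]

end GammaIntegral

section Torus

lemma exists_circle_pow_ne_pow {a b : ℕ} (h : a ≠ b) : ∃ c : Circle, c ^ a ≠ c ^ b := by
  have hab : (a : ℝ) - b ≠ 0 := sub_ne_zero.2 (mod_cast h)
  refine ⟨Circle.exp (Real.pi / (a - b)), fun hc => Circle.exp_pi_ne_one ?_⟩
  rw [← Circle.exp_natCast_mul, ← Circle.exp_natCast_mul, ← div_eq_one, ← Circle.exp_sub,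
    ← sub_mul, mul_div_cancel₀ _ hab] at hc
  exact hc

variable {ι : Type*} [Fintype ι]

lemma integral_comp_circle_mul {E : Type*} [NormedAddCommGroup E] [NormedSpace ℝ E]
    (u : ι → Circle) (f : (ι → ℂ) → E) :
    ∫ z : ι → ℂ, f (fun j => u j * z j) = ∫ z, f z := by
  have hu : MeasurePreserving (fun z : ι → ℂ => fun j => (u j : ℂ) * z j) :=
    volume_preserving_pi fun j => (rotation (u j)).measurePreserving
  exact hu.integral_comp
    (Homeomorph.piCongrRight fun j => (rotation (u j)).toHomeomorph).measurableEmbedding f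

theorem integral_conj_monomial_mul_monomial_mul_eq_zero {α β : ι → ℕ} (h : α ≠ β)
    (w : (ι → ℝ) → ℂ) :
    ∫ z : ι → ℂ, conj (∏ j, z j ^ α j) * (∏ j, z j ^ β j) * w (fun j => ‖z j‖) = 0 := by
  classical
  obtain ⟨i, hi⟩ := Function.ne_iff.1 h
  obtain ⟨c, hc⟩ := exists_circle_pow_ne_pow hi
  let u : ι → Circle := Pi.mulSingle i c
  have hu (γ : ι → ℕ) : ∏ j, (u j : ℂ) ^ γ j = (c : ℂ) ^ γ i := by
    rw [Finset.prod_eq_single i (fun j _ hj => by simp [u, Pi.mulSingle_eq_of_ne hj]) (by simp)]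
    simp [u]
  have hrot := integral_comp_circle_mul u
    fun z => conj (∏ j, z j ^ α j) * (∏ j, z j ^ β j) * w (fun j => ‖z j‖)
  have hfactor (z : ι → ℂ) : conj (∏ j, (u j * z j) ^ α j) * (∏ j, (u j * z j) ^ β j) *
      w (fun j => ‖u j * z j‖) = (conj ((c : ℂ) ^ α i) * (c : ℂ) ^ β i) *
        (conj (∏ j, z j ^ α j) * (∏ j, z j ^ β j) * w (fun j => ‖z j‖)) := by
    simp only [mul_pow, Finset.prod_mul_distrib, hu, map_mul, norm_mul, Circle.norm_coe, one_mul]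
    ring
  simp only [hfactor, integral_const_mul] at hrot
  refine (mul_left_eq_self₀.1 hrot).resolve_left fun hone => hc ?_
  rw [← Circle.coe_pow, ← Circle.coe_pow, ← Circle.coe_inv_eq_conj, ← Circle.coe_mul,
    Circle.coe_eq_one, inv_mul_eq_one] at hone
  exact hone

end Torus

section FubiniStudy

variable {ι : Type*} [Fintype ι]

lemma integral_normSq_pow_mul_exp (a : ℕ) {t : ℝ} (ht : 0 < t) :
    ∫ z : ℂ, Complex.normSq z ^ a * Real.exp (-(t * Complex.normSq z)) =
      Real.pi * a ! / t ^ (a + 1) := by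
  have h := Complex.integral_rpow_mul_exp_neg_mul_rpow (p := 2) (q := 2 * a) one_le_two
    (by linarith [Nat.cast_nonneg (α := ℝ) a]) ht
  rw [show (2 * a + 2 : ℝ) / 2 = a + 1 by ring, show -(2 * a + 2 : ℝ) / 2 = -(a + 1 : ℕ) by
    push_cast; ring, Real.Gamma_nat_eq_factorial, Real.rpow_neg ht.le, Real.rpow_natCast] at h
  simp only [Real.rpow_mul (norm_nonneg _), Real.rpow_two, Real.rpow_natCast, neg_mul,
    ← Complex.normSq_eq_norm_sq] at h
  rw [h]
  ring

lemma integral_prod_normSq_pow_mul_exp (α : ι → ℕ) {t : ℝ} (ht : 0 < t) :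
    ∫ z : ι → ℂ, (∏ j, Complex.normSq (z j) ^ α j) *
        Real.exp (-(t * (1 + ∑ j, Complex.normSq (z j)))) =
      Real.exp (-t) *
        (Real.pi ^ Fintype.card ι * (∏ j, (α j)!) / t ^ (∑ j, α j + Fintype.card ι)) := by
  have hprod (z : ι → ℂ) : (∏ j, Complex.normSq (z j) ^ α j) *
      Real.exp (-(t * (1 + ∑ j, Complex.normSq (z j)))) =
      Real.exp (-t) *
        ∏ j, Complex.normSq (z j) ^ α j * Real.exp (-(t * Complex.normSq (z j))) := by
    rw [Finset.prod_mul_distrib, ← Real.exp_sum, Finset.sum_neg_distrib, ← Finset.mul_sum,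
      mul_left_comm, ← Real.exp_add]
    ring_nf
  simp only [hprod, integral_const_mul, integral_fintype_prod_volume_eq_prod fun j z =>
    Complex.normSq z ^ α j * Real.exp (-(t * Complex.normSq z)), integral_normSq_pow_mul_exp _ ht]
  simp [Finset.prod_div_distrib, Finset.prod_mul_distrib, Finset.prod_pow_eq_pow_sum,
    Finset.sum_add_distrib]

/-- The density `(1 + ‖z‖²)⁻ᴺ` on `ℂ^ι`, where `‖z‖` is the Euclidean norm (the norm of
`ι → ℂ` in Mathlib is the supremum norm). -/
noncomputable def fubiniStudyWeight (N : ℕ) (z : ι → ℂ) : ℝ :=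
  ((1 + ∑ j, Complex.normSq (z j)) ^ N)⁻¹

lemma one_add_sum_normSq_pos (z : ι → ℂ) : 0 < 1 + ∑ j, Complex.normSq (z j) :=
  add_pos_of_pos_of_nonneg one_pos (Finset.sum_nonneg fun _ _ => Complex.normSq_nonneg _)

lemma fubiniStudyWeight_pos (N : ℕ) (z : ι → ℂ) : 0 < fubiniStudyWeight N z :=
  inv_pos.2 (pow_pos (one_add_sum_normSq_pos z) N)

@[fun_prop]
lemma measurable_fubiniStudyWeight (N : ℕ) :
    Measurable (fubiniStudyWeight N : (ι → ℂ) → ℝ) := by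
  unfold fubiniStudyWeight
  fun_prop

theorem integral_prod_normSq_pow_mul_fubiniStudyWeight {m : ℕ} {α : ι → ℕ}
    (hα : ∑ j, α j ≤ m) :
    ∫ z, (∏ j, Complex.normSq (z j) ^ α j) * fubiniStudyWeight (m + Fintype.card ι + 1) z =
      Real.pi ^ Fintype.card ι * (∏ j, (α j)!) * (m - ∑ j, α j)! / (m + Fintype.card ι)! := by
  obtain ⟨k, rfl⟩ := exists_add_of_le hα
  have moment {t : ℝ} (ht : 0 < t) : t ^ (∑ j, α j + k + Fintype.card ι) *
      ∫ z : ι → ℂ, (∏ j, Complex.normSq (z j) ^ α j) *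
        Real.exp (-(t * (1 + ∑ j, Complex.normSq (z j)))) =
      Real.pi ^ Fintype.card ι * (∏ j, (α j)!) * (t ^ k * Real.exp (-(t * 1))) := by
    rw [integral_prod_normSq_pow_mul_exp α ht, add_right_comm, pow_add, mul_one]
    field_simp
  have gamma := integral_pow_mul_exp_neg_mul_Ioi k one_pos
  rw [one_pow, div_one] at gamma
  have hgamma : IntegrableOn (fun t : ℝ => t ^ k * Real.exp (-(t * 1))) (Set.Ioi 0) :=
    .of_integral_ne_zero (by rw [gamma]; positivity)
  simp only [fubiniStudyWeight, add_tsub_cancel_left]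
  rw [integral_mul_inv_pow_eq_integral_exp
      (Finset.measurable_prod _ fun j _ => by fun_prop) (by fun_prop)
      (fun z => Finset.prod_nonneg fun j _ => pow_nonneg (Complex.normSq_nonneg _) _)
      one_add_sum_normSq_pos
      (fun t ht => .of_integral_ne_zero (by rw [integral_prod_normSq_pow_mul_exp α ht]; positivity))
      (IntegrableOn.congr_fun (hgamma.const_mul _) (fun t ht => (moment ht).symm)
        measurableSet_Ioi),
    setIntegral_congr_fun measurableSet_Ioi fun t ht => moment ht, integral_const_mul, gamma]
  ring

lemma integral_fubiniStudyWeight (m : ℕ) :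
    ∫ z : ι → ℂ, fubiniStudyWeight (m + Fintype.card ι + 1) z =
      Real.pi ^ Fintype.card ι * m ! / (m + Fintype.card ι)! := by
  simpa using integral_prod_normSq_pow_mul_fubiniStudyWeight (α := (0 : ι → ℕ)) (m := m) (by simp)

lemma prod_normSq_pow (α : ι → ℕ) (z : ι → ℂ) :
    ∏ j, Complex.normSq (z j) ^ α j = Complex.normSq (∏ j, z j ^ α j) := by
  simp only [map_prod, map_pow]

lemma integrable_conj_monomial_mul_monomial_mul_fubiniStudyWeight {m : ℕ} {α β : ι → ℕ}
    (hα : ∑ j, α j ≤ m) (hβ : ∑ j, β j ≤ m) :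
    Integrable fun z : ι → ℂ => conj (∏ j, z j ^ α j) * (∏ j, z j ^ β j) *
      (fubiniStudyWeight (m + Fintype.card ι + 1) z : ℂ) := by
  have hsq {γ : ι → ℕ} (hγ : ∑ j, γ j ≤ m) : Integrable fun z : ι → ℂ =>
      (∏ j, Complex.normSq (z j) ^ γ j) * fubiniStudyWeight (m + Fintype.card ι + 1) z :=
    .of_integral_ne_zero <| by
      rw [integral_prod_normSq_pow_mul_fubiniStudyWeight hγ]; positivity
  refine ((hsq hα).add (hsq hβ)).mono' (by fun_prop) (.of_forall fun z => ?_)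
  have hw := fubiniStudyWeight_pos (m + Fintype.card ι + 1) z
  rw [Pi.add_apply, ← add_mul, prod_normSq_pow, prod_normSq_pow, Complex.normSq_eq_norm_sq,
    Complex.normSq_eq_norm_sq, norm_mul, norm_mul, RCLike.norm_conj, Complex.norm_real,
    Real.norm_of_nonneg hw.le]
  gcongr
  nlinarith [two_mul_le_add_sq ‖∏ j, z j ^ α j‖ ‖∏ j, z j ^ β j‖,
    mul_nonneg (norm_nonneg (∏ j, z j ^ α j)) (norm_nonneg (∏ j, z j ^ β j))]

end FubiniStudy

section Polynomial

variable {ι : Type*} [Fintype ι] {m : ℕ}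

lemma sum_le_totalDegree {R : Type*} [CommSemiring R] {p : MvPolynomial ι R} {α : ι →₀ ℕ}
    (hα : α ∈ p.support) : ∑ j, α j ≤ p.totalDegree :=
  (Finsupp.sum_fintype α (fun _ e => e) fun _ => rfl).symm.trans_le
    (MvPolynomial.le_totalDegree hα)

lemma conj_eval_eq_sum (p : MvPolynomial ι ℂ) (z : ι → ℂ) :
    conj (MvPolynomial.eval z p) = ∑ α ∈ p.support, conj (p.coeff α) * conj (∏ j, z j ^ α j) := by
  simp only [MvPolynomial.eval_eq', map_sum, map_mul]

lemma integrable_conj_eval_mul_monomial_mul_fubiniStudyWeight {p : MvPolynomial ι ℂ}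
    (hp : p.totalDegree ≤ m) {β : ι → ℕ} (hβ : ∑ j, β j ≤ m) :
    Integrable fun z : ι → ℂ => conj (MvPolynomial.eval z p) * (∏ j, z j ^ β j) *
      (fubiniStudyWeight (m + Fintype.card ι + 1) z : ℂ) := by
  simp only [conj_eval_eq_sum, Finset.sum_mul, mul_assoc (conj (p.coeff _))]
  exact integrable_finsetSum _ fun α hα =>
    (integrable_conj_monomial_mul_monomial_mul_fubiniStudyWeight
      ((sum_le_totalDegree hα).trans hp) hβ).const_mul _

lemma integral_conj_monomial_self_mul_fubiniStudyWeight {α : ι → ℕ} (hα : ∑ j, α j ≤ m) :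
    ∫ z : ι → ℂ, conj (∏ j, z j ^ α j) * (∏ j, z j ^ α j) *
        (fubiniStudyWeight (m + Fintype.card ι + 1) z : ℂ) =
      Real.pi ^ Fintype.card ι * (∏ j, (α j)!) * (m - ∑ j, α j)! / (m + Fintype.card ι)! := by
  have hreal (z : ι → ℂ) : conj (∏ j, z j ^ α j) * (∏ j, z j ^ α j) *
      (fubiniStudyWeight (m + Fintype.card ι + 1) z : ℂ) =
      ((∏ j, Complex.normSq (z j) ^ α j) * fubiniStudyWeight (m + Fintype.card ι + 1) z : ℝ) := by
    rw [← Complex.normSq_eq_conj_mul_self, prod_normSq_pow, Complex.ofReal_mul]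
  simp only [hreal]
  rw [integral_complex_ofReal, integral_prod_normSq_pow_mul_fubiniStudyWeight hα]
  push_cast
  rfl

lemma integral_conj_monomial_mul_monomial_mul_fubiniStudyWeight_of_ne {α β : ι → ℕ}
    (h : α ≠ β) (N : ℕ) :
    ∫ z : ι → ℂ, conj (∏ j, z j ^ α j) * (∏ j, z j ^ β j) * (fubiniStudyWeight N z : ℂ) = 0 := by
  simpa only [fubiniStudyWeight, Complex.normSq_eq_norm_sq] using
    integral_conj_monomial_mul_monomial_mul_eq_zero h
      fun r => (((1 + ∑ j, r j ^ 2) ^ N)⁻¹ : ℝ)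

theorem integral_conj_eval_mul_monomial_mul_fubiniStudyWeight {p : MvPolynomial ι ℂ}
    (hp : p.totalDegree ≤ m) {β : ι →₀ ℕ} (hβ : ∑ j, β j ≤ m) :
    ∫ z : ι → ℂ, conj (MvPolynomial.eval z p) * (∏ j, z j ^ β j) *
        (fubiniStudyWeight (m + Fintype.card ι + 1) z : ℂ) =
      conj (p.coeff β) * (Real.pi ^ Fintype.card ι * (∏ j, (β j)!) * (m - ∑ j, β j)! /
        (m + Fintype.card ι)!) := by
  simp only [conj_eval_eq_sum, Finset.sum_mul, mul_assoc (conj (p.coeff _))]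
  rw [integral_finsetSum _ fun α hα =>
    (integrable_conj_monomial_mul_monomial_mul_fubiniStudyWeight
      ((sum_le_totalDegree hα).trans hp) hβ).const_mul _]
  simp only [integral_const_mul]
  rw [Finset.sum_eq_single β, integral_conj_monomial_self_mul_fubiniStudyWeight hβ]
  · intro α _ hαβ
    rw [integral_conj_monomial_mul_monomial_mul_fubiniStudyWeight_of_ne
      (DFunLike.coe_injective.ne hαβ), mul_zero]
  · intro hβ
    rw [MvPolynomial.notMem_support_iff.1 hβ, map_zero, zero_mul]

lemma coeff_one_add_sum_smul_X_pow {R : Type*} [CommSemiring R] (a : ι → R) (m : ℕ)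
    (α : ι →₀ ℕ) :
    ((1 + ∑ j, a j • MvPolynomial.X j : MvPolynomial ι R) ^ m).coeff α =
      m.choose (∑ j, α j) * (α.multinomial * ∏ j, a j ^ α j) := by
  have hsum : (α.sum fun _ e => e) = ∑ j, α j := Finsupp.sum_fintype _ _ fun _ => rfl
  have hterm (k : ℕ) : ((∑ j, a j • MvPolynomial.X j : MvPolynomial ι R) ^ k * 1 ^ (m - k) *
      m.choose k).coeff α =
      if ∑ j, α j = k then m.choose k * (α.multinomial * ∏ j, a j ^ α j) else 0 := by
    rw [one_pow, mul_one, mul_comm, ← MvPolynomial.C_eq_coe_nat, MvPolynomial.coeff_C_mul,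
      MvPolynomial.coeff_linearCombination_X_pow_of_fintype, hsum,
      Finsupp.prod_fintype _ _ fun _ => pow_zero _, mul_ite, mul_zero]
  simp only [add_comm (1 : MvPolynomial ι R), add_pow, MvPolynomial.coeff_sum, hterm,
    Finset.sum_ite_eq, Finset.mem_range_succ_iff, ite_eq_left_iff, not_le]
  intro hm
  rw [Nat.choose_eq_zero_of_lt hm, Nat.cast_zero, zero_mul]

/-- The coherent state `z ↦ (1 + ⟨μ, z⟩) ^ m` as a polynomial. -/
noncomputable def coherentPoly (m : ℕ) (μ : ι → ℂ) : MvPolynomial ι ℂ :=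
  (1 + ∑ j, conj (μ j) • MvPolynomial.X j) ^ m

lemma eval_coherentPoly (m : ℕ) (μ z : ι → ℂ) :
    MvPolynomial.eval z (coherentPoly m μ) = (1 + ∑ j, conj (μ j) * z j) ^ m := by
  simp [coherentPoly, MvPolynomial.smul_eval]

lemma totalDegree_coherentPoly_le (m : ℕ) (μ : ι → ℂ) : (coherentPoly m μ).totalDegree ≤ m := by
  have hlinear : (1 + ∑ j, conj (μ j) • MvPolynomial.X j : MvPolynomial ι ℂ).totalDegree ≤ 1 :=
    (MvPolynomial.totalDegree_add _ _).trans <| max_le (by simp) <|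
      MvPolynomial.totalDegree_finsetSum_le fun j _ =>
        (MvPolynomial.totalDegree_smul_le _ _).trans (MvPolynomial.totalDegree_X j).le
  exact (MvPolynomial.totalDegree_pow _ m).trans (mul_le_of_le_one_right m.zero_le hlinear)

lemma coeff_coherentPoly_mul_factorial (μ : ι → ℂ) {α : ι →₀ ℕ} (hα : ∑ j, α j ≤ m) :
    (coherentPoly m μ).coeff α * ((∏ j, (α j)!) * (m - ∑ j, α j)! : ℕ) =
      m ! * ∏ j, conj (μ j) ^ α j := by
  have hfactorial : α.multinomial * m.choose (∑ j, α j) * ((∏ j, (α j)!) * (m - ∑ j, α j)!) =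
      m ! := by
    rw [α.multinomial_eq_of_support_subset (Finset.subset_univ _),
      ← Nat.choose_mul_factorial_mul_factorial hα, ← Nat.multinomial_spec]
    ring
  rw [coherentPoly, coeff_one_add_sum_smul_X_pow, ← hfactorial]
  push_cast
  ring

theorem integral_conj_coherentPoly_mul_eval_mul_fubiniStudyWeight {q : MvPolynomial ι ℂ}
    (hq : q.totalDegree ≤ m) (μ : ι → ℂ) :
    ∫ z : ι → ℂ, conj (MvPolynomial.eval z (coherentPoly m μ)) * MvPolynomial.eval z q *
        (fubiniStudyWeight (m + Fintype.card ι + 1) z : ℂ) =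
      (Real.pi ^ Fintype.card ι * m ! / (m + Fintype.card ι)! : ℝ) * MvPolynomial.eval μ q := by
  have hdeg {α : ι →₀ ℕ} (hα : α ∈ q.support) : ∑ j, α j ≤ m := (sum_le_totalDegree hα).trans hq
  have hp := totalDegree_coherentPoly_le m μ
  have hexpand (z : ι → ℂ) : conj (MvPolynomial.eval z (coherentPoly m μ)) *
      MvPolynomial.eval z q * (fubiniStudyWeight (m + Fintype.card ι + 1) z : ℂ) =
      ∑ α ∈ q.support, q.coeff α * (conj (MvPolynomial.eval z (coherentPoly m μ)) *
        (∏ j, z j ^ α j) * (fubiniStudyWeight (m + Fintype.card ι + 1) z : ℂ)) := by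
    rw [MvPolynomial.eval_eq' z q, Finset.mul_sum, Finset.sum_mul]
    exact Finset.sum_congr rfl fun α _ => by ring
  simp only [hexpand]
  rw [integral_finsetSum _ fun α hα =>
      (integrable_conj_eval_mul_monomial_mul_fubiniStudyWeight hp (hdeg hα)).const_mul _,
    MvPolynomial.eval_eq' μ q, Finset.mul_sum]
  refine Finset.sum_congr rfl fun α hα => ?_
  have hcoeff := congrArg conj (coeff_coherentPoly_mul_factorial μ (hdeg hα))
  simp only [map_mul, map_prod, map_pow, Complex.conj_conj, map_natCast] at hcoeff
  rw [integral_const_mul, integral_conj_eval_mul_monomial_mul_fubiniStudyWeight hp (hdeg hα)]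
  push_cast at hcoeff ⊢
  linear_combination (q.coeff α * Real.pi ^ Fintype.card ι / (m + Fintype.card ι)!) * hcoeff

end Polynomial

section ReproducingKernel

lemma cconst_eq (n m : ℕ) : cconst n m = (Real.pi ^ n * m ! / (m + n)!)⁻¹ := by
  have h := integral_fubiniStudyWeight (ι := Fin n) m
  rw [Fintype.card_fin] at h
  exact congrArg (·⁻¹) h

lemma psiCS_eq_eval_coherentPoly {n : ℕ} (m : ℕ) (μ : Fin n → ℂ) :
    psiCS n m μ = fun z => MvPolynomial.eval z (coherentPoly m μ) :=
  funext fun z => (eval_coherentPoly m μ z).symm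

theorem wInner_psiCS_eval {n m : ℕ} {P : MvPolynomial (Fin n) ℂ} (hP : P.totalDegree ≤ m)
    (μ : Fin n → ℂ) :
    wInner n m (psiCS n m μ) (fun ν => MvPolynomial.eval ν P) = MvPolynomial.eval μ P := by
  have h := integral_conj_coherentPoly_mul_eval_mul_fubiniStudyWeight hP μ
  simp only [Fintype.card_fin, fubiniStudyWeight, Complex.ofReal_inv] at h
  rw [wInner, psiCS_eq_eval_coherentPoly, h, cconst_eq, Complex.ofReal_inv,
    inv_mul_cancel_left₀ (Complex.ofReal_ne_zero.2 (by positivity))]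

end ReproducingKernel

/-- reproducing kernel property.  For every polynomial `Ψ` of total
degree at most `m` and every `μ ∈ ℂⁿ`,
`⟨ψ_μ, Ψ⟩ₘ = c(m) ∫ (1 + Σⱼ μⱼ conj(νⱼ))^m Ψ(ν) (1+‖ν‖²)^{-(m+n+1)} dλ(ν) = Ψ(μ)`;
in particular `⟨ψ_μ, ψ_ν⟩ₘ = ψ_ν(μ) = (1+⟨ν,μ⟩)^m` for all `μ, ν`. -/
theorem stmt_4 (n m : ℕ) (hn : 1 ≤ n) (P : MvPolynomial (Fin n) ℂ)
    (hP : P.totalDegree ≤ m) (μ : Fin n → ℂ) :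
    (wInner n m (psiCS n m μ) (fun ν => MvPolynomial.eval ν P)
        = ((cconst n m : ℝ) : ℂ) *
          ∫ ν : Fin n → ℂ, (1 + ∑ j, μ j * (starRingEnd ℂ) (ν j)) ^ m *
            MvPolynomial.eval ν P *
            ((((1 + ∑ j, Complex.normSq (ν j)) ^ (m + n + 1) : ℝ) : ℂ))⁻¹) ∧
    wInner n m (psiCS n m μ) (fun ν => MvPolynomial.eval ν P)
        = MvPolynomial.eval μ P ∧
    ∀ ν : Fin n → ℂ, wInner n m (psiCS n m μ) (psiCS n m ν) = psiCS n m ν μ := by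
  refine ⟨?_, wInner_psiCS_eval hP μ, fun ν => ?_⟩
  · simp only [wInner, psiCS, map_pow, map_add, map_one, map_sum, map_mul, Complex.conj_conj]
  · rw [psiCS_eq_eval_coherentPoly m ν]
    exact wInner_psiCS_eval (totalDegree_coherentPoly_le m ν) μ
end
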